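/- arXiv:2203.16206 — 2 statements merged into one kernel-verified Lean document; each statement's English description precedes it below -/
import Mathlib

section
/- Let φ : ℝ → ℝ be differentiable with φ(0) = 0 and φ'(u) = √(c² + 2·cos θ·B(u) − D²·B(u)²) for all u, where B(u) = λ₁²·cos²(φ u) + λ₂²·sin²(φ u) and D = sin θ / c, let U > 0 satisfy φ(u + U) = φ(u) + π for all u, and let f : ℝ → ℝ be differentiable with f(0) = 0 and f'(u) = D·B(u) for all u. Then: (1) f is odd, i.e. f(−u) = −f(u) for all u; (2) f(u + U) = f(u) + f(U) for all u ∈ ℝ; (3) f(k·U) = k·f(U) for every integer k. -/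
open Real

/-- The critical angle `θ_c⁺`. -/
noncomputable def thetaPlus (l1 c : ℝ) : ℝ :=
  if c > Real.sqrt 2 * l1 then π else Real.arccos (1 - c ^ 2 / l1 ^ 2)

/-- The quantity `B(u) = λ₁² cos²(φ u) + λ₂² sin²(φ u)`. -/
noncomputable def Bfun (l1 l2 : ℝ) (φ : ℝ → ℝ) (u : ℝ) : ℝ :=
  l1 ^ 2 * Real.cos (φ u) ^ 2 + l2 ^ 2 * Real.sin (φ u) ^ 2

/-!
The radicand of the equation for `φ` factors as
`(c² - (1 - cos θ) B) (c² + (1 + cos θ) B) / c²`, and `|θ| < θ_c⁺` makes the first factor positive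
because `B ≤ λ₁²`. So `φ` solves an autonomous equation `φ' = G ∘ φ` with `G` continuous, even and
nowhere zero. Such an equation has unique solutions (separate variables), and `u ↦ -φ (-u)` is
another solution vanishing at `0`, so `φ` is odd. Hence `f' = D B` is even, and it is `U`-periodic
because `cos²` and `sin²` are `π`-periodic; integrating gives the symmetries of `f`.
-/

section Antiderivative

variable {𝕜 E : Type*} [RCLike 𝕜] [NormedAddCommGroup E] [NormedSpace 𝕜 E] {f g : 𝕜 → E}

theorem eq_of_deriv_eq_of_eq_at (hf : Differentiable 𝕜 f) (hg : Differentiable 𝕜 g)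
    (hderiv : ∀ x, deriv f x = deriv g x) {a : 𝕜} (ha : f a = g a) : f = g := by
  funext x
  have hconst : (f - g) x = (f - g) a :=
    is_const_of_deriv_eq_zero (hf.sub hg)
      (fun y ↦ by rw [deriv_sub (hf y) (hg y), hderiv, sub_self]) x a
  rwa [Pi.sub_apply, Pi.sub_apply, ha, sub_self, sub_eq_zero] at hconst

theorem odd_of_even_deriv (hf : Differentiable 𝕜 f) (hf0 : f 0 = 0)
    (heven : (deriv f).Even) : f.Odd := by
  have heq : (fun x ↦ f (-x)) = fun x ↦ -f x :=
    eq_of_deriv_eq_of_eq_at (a := 0) (by fun_prop) (by fun_prop)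
      (fun x ↦ by rw [deriv_comp_neg, deriv.fun_neg, heven x]) (by simp [hf0])
  exact congrFun heq

theorem map_add_period_of_periodic_deriv (hf : Differentiable 𝕜 f) (hf0 : f 0 = 0) {p : 𝕜}
    (hper : Function.Periodic (deriv f) p) (x : 𝕜) : f (x + p) = f x + f p := by
  have heq : (fun x ↦ f (x + p)) = fun x ↦ f x + f p :=
    eq_of_deriv_eq_of_eq_at (a := 0) (by fun_prop) (by fun_prop)
      (fun x ↦ by rw [deriv_comp_add_const, deriv_add_const, hper x]) (by simp [hf0])
  exact congrFun heq x

end Antiderivative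

theorem map_zsmul_of_map_add_eq {A B : Type*} [AddGroup A] [AddGroup B] {f : A → B} {a : A}
    (hf0 : f 0 = 0) (hf : ∀ x, f (x + a) = f x + f a) (k : ℤ) : f (k • a) = k • f a := by
  let F : AddConstMap A B a (f a) := ⟨f, hf⟩
  simpa [F, hf0] using AddConstMapClass.map_zsmul_const F k

section AutonomousEquation

theorem injective_of_deriv_ne_zero {f : ℝ → ℝ} (hf : ∀ x, deriv f x ≠ 0) :
    Function.Injective f := by
  have hcont : Continuous f :=
    continuous_iff_continuousAt.2 fun x ↦ (differentiableAt_of_deriv_ne_zero (hf x)).continuousAt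
  refine .of_lt_imp_ne fun x y hxy heq ↦ ?_
  obtain ⟨z, -, hz⟩ := exists_deriv_eq_zero hxy hcont.continuousOn heq
  exact hf z hz

variable {G φ ψ : ℝ → ℝ}

theorem autonomous_solution_unique (hG : Continuous G) (hG0 : ∀ x, G x ≠ 0)
    (hφ : ∀ u, HasDerivAt φ (G (φ u)) u) (hψ : ∀ u, HasDerivAt ψ (G (ψ u)) u)
    {a : ℝ} (ha : φ a = ψ a) : φ = ψ := by
  -- `H` is the time needed to travel from `0` at speed `G`: it grows at unit rate along solutions.
  let H : ℝ → ℝ := fun x ↦ ∫ t in (0 : ℝ)..x, (G t)⁻¹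
  have hH (x : ℝ) : HasDerivAt H (G x)⁻¹ x :=
    ((hG.inv₀ hG0).integral_hasStrictDerivAt 0 x).hasDerivAt
  have hH_injective : Function.Injective H :=
    injective_of_deriv_ne_zero fun x ↦ (hH x).deriv ▸ inv_ne_zero (hG0 x)
  have hunit {χ : ℝ → ℝ} (hχ : ∀ u, HasDerivAt χ (G (χ u)) u) (u : ℝ) :
      HasDerivAt (H ∘ χ) 1 u := by
    simpa only [inv_mul_cancel₀ (hG0 (χ u))] using (hH (χ u)).comp u (hχ u)
  have hcomp : H ∘ φ = H ∘ ψ :=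
    eq_of_deriv_eq_of_eq_at (fun u ↦ (hunit hφ u).differentiableAt)
      (fun u ↦ (hunit hψ u).differentiableAt)
      (fun u ↦ (hunit hφ u).deriv.trans (hunit hψ u).deriv.symm) (congrArg H ha)
  exact hH_injective.comp_left hcomp

theorem autonomous_solution_odd (hG : Continuous G) (hG0 : ∀ x, G x ≠ 0) (heven : G.Even)
    (hφ : ∀ u, HasDerivAt φ (G (φ u)) u) (hφ0 : φ 0 = 0) : φ.Odd := by
  have hreflect (u : ℝ) : HasDerivAt (fun v ↦ -φ (-v)) (G (-φ (-u))) u := by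
    simpa [heven (φ (-u))] using! ((hφ (-u)).comp u (hasDerivAt_neg u)).neg
  have heq : (fun v ↦ -φ (-v)) = φ :=
    autonomous_solution_unique hG hG0 hreflect hφ (a := 0) (by simp [hφ0])
  exact fun u ↦ neg_eq_iff_eq_neg.1 (congrFun heq u)

end AutonomousEquation

section Bfun

variable (l1 l2 : ℝ) {φ : ℝ → ℝ}

theorem Bfun_nonneg (φ : ℝ → ℝ) (u : ℝ) : 0 ≤ Bfun l1 l2 φ u := by
  unfold Bfun
  positivity

variable {l1 l2} in
theorem Bfun_le_sq (h : l2 ^ 2 ≤ l1 ^ 2) (φ : ℝ → ℝ) (u : ℝ) : Bfun l1 l2 φ u ≤ l1 ^ 2 :=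
  calc
    Bfun l1 l2 φ u ≤ l1 ^ 2 * cos (φ u) ^ 2 + l1 ^ 2 * sin (φ u) ^ 2 := by unfold Bfun; gcongr
    _ = l1 ^ 2 := by rw [← mul_add, cos_sq_add_sin_sq, mul_one]

theorem continuous_Bfun (hφ : Continuous φ) : Continuous (Bfun l1 l2 φ) := by
  unfold Bfun
  fun_prop

theorem Bfun_even (hφ : φ.Odd) : (Bfun l1 l2 φ).Even := fun u ↦ by
  simp only [Bfun, hφ u, cos_neg, sin_neg, neg_sq]

theorem Bfun_periodic {U : ℝ} (hφ : ∀ u, φ (u + U) = φ u + π) :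
    Function.Periodic (Bfun l1 l2 φ) U := fun u ↦ by
  simp only [Bfun, hφ u, cos_add_pi, sin_add_pi, neg_sq]

end Bfun

section Speed

variable {l1 l2 c θ : ℝ}

theorem one_sub_cos_mul_sq_lt_of_abs_lt_thetaPlus (hl1 : 0 < l1) (hc : 0 ≤ c)
    (hθ : |θ| < thetaPlus l1 c) : (1 - cos θ) * l1 ^ 2 < c ^ 2 := by
  have hsq : (√2 * l1) ^ 2 = 2 * l1 ^ 2 := by rw [mul_pow, sq_sqrt zero_le_two]
  unfold thetaPlus at hθ
  split_ifs at hθ with hlarge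
  · calc
      (1 - cos θ) * l1 ^ 2 ≤ 2 * l1 ^ 2 := by gcongr; linarith [neg_one_le_cos θ]
      _ = (√2 * l1) ^ 2 := hsq.symm
      _ < c ^ 2 := by gcongr
  · have hsmall : c ^ 2 ≤ 2 * l1 ^ 2 := hsq ▸ pow_le_pow_left₀ hc (not_lt.1 hlarge) 2
    have hratio : c ^ 2 / l1 ^ 2 ≤ 2 := (div_le_iff₀ (by positivity)).2 hsmall
    have hratio0 : 0 ≤ c ^ 2 / l1 ^ 2 := by positivity
    have hcos : 1 - c ^ 2 / l1 ^ 2 < cos θ := by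
      have hanti := cos_lt_cos_of_nonneg_of_le_pi (abs_nonneg θ) (arccos_le_pi _) hθ
      rwa [cos_abs, cos_arccos (by linarith) (by linarith)] at hanti
    exact (lt_div_iff₀ (by positivity)).1 (by linarith)

theorem radicand_eq_mul_div (hc : c ≠ 0) (b : ℝ) :
    c ^ 2 + 2 * cos θ * b - (sin θ / c) ^ 2 * b ^ 2 =
      (c ^ 2 - (1 - cos θ) * b) * (c ^ 2 + (1 + cos θ) * b) / c ^ 2 := by
  rw [div_pow, sin_sq]
  field_simp
  ring

theorem radicand_pos {b : ℝ} (hb : 0 ≤ b) (h : (1 - cos θ) * b < c ^ 2) :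
    0 < c ^ 2 + 2 * cos θ * b - (sin θ / c) ^ 2 * b ^ 2 := by
  have hminus : 0 ≤ 1 - cos θ := sub_nonneg.2 (cos_le_one θ)
  have hplus : 0 ≤ 1 + cos θ := neg_le_iff_add_nonneg'.1 (neg_one_le_cos θ)
  have hc2 : 0 < c ^ 2 := (mul_nonneg hminus hb).trans_lt h
  rw [radicand_eq_mul_div (pow_ne_zero_iff two_ne_zero |>.1 hc2.ne')]
  exact div_pos (mul_pos (sub_pos.2 h) (by positivity)) hc2

/-- The speed `G` in the autonomous form `φ' = G ∘ φ` of the equation for `φ`; the quantity `B`,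
as a function of the value `x = φ u` rather than of the parameter `u`, is `Bfun l1 l2 id x`. -/
noncomputable def profileSpeed (l1 l2 c θ x : ℝ) : ℝ :=
  √(c ^ 2 + 2 * cos θ * Bfun l1 l2 id x - (sin θ / c) ^ 2 * Bfun l1 l2 id x ^ 2)

theorem continuous_profileSpeed (l1 l2 c θ : ℝ) : Continuous (profileSpeed l1 l2 c θ) := by
  have hB : Continuous (Bfun l1 l2 id) := continuous_Bfun l1 l2 continuous_id
  unfold profileSpeed
  fun_prop

theorem profileSpeed_even (l1 l2 c θ : ℝ) : (profileSpeed l1 l2 c θ).Even := fun x ↦ by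
  simp only [profileSpeed, Bfun_even l1 l2 (φ := id) (fun _ ↦ rfl) x]

theorem profileSpeed_pos (hl : l2 ^ 2 ≤ l1 ^ 2) (h : (1 - cos θ) * l1 ^ 2 < c ^ 2) (x : ℝ) :
    0 < profileSpeed l1 l2 c θ x := by
  refine sqrt_pos.2 (radicand_pos (Bfun_nonneg l1 l2 id x) (lt_of_le_of_lt ?_ h))
  have hminus : 0 ≤ 1 - cos θ := sub_nonneg.2 (cos_le_one θ)
  gcongr
  exact Bfun_le_sq hl id x

end Speed

theorem catenoid_f_odd_quasiperiodic
    (l1 l2 c θ : ℝ) (hl : l1 ≥ l2) (hl2 : l2 > 0) (hc : c > 0)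
    (hθ : |θ| < thetaPlus l1 c)
    (φ : ℝ → ℝ) (hφ : Differentiable ℝ φ) (hφ0 : φ 0 = 0)
    (hφ' : ∀ u, deriv φ u =
      Real.sqrt (c ^ 2 + 2 * Real.cos θ * Bfun l1 l2 φ u -
        (Real.sin θ / c) ^ 2 * Bfun l1 l2 φ u ^ 2))
    (U : ℝ) (hU : U > 0) (hφU : ∀ u, φ (u + U) = φ u + π)
    (f : ℝ → ℝ) (hf : Differentiable ℝ f) (hf0 : f 0 = 0)
    (hf' : ∀ u, deriv f u = (Real.sin θ / c) * Bfun l1 l2 φ u) :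
    (∀ u, f (-u) = -f u) ∧
    (∀ u, f (u + U) = f u + f U) ∧
    (∀ k : ℤ, f (k * U) = k * f U) := by
  have hspeed : ∀ x, 0 < profileSpeed l1 l2 c θ x :=
    profileSpeed_pos (pow_le_pow_left₀ hl2.le hl 2)
      (one_sub_cos_mul_sq_lt_of_abs_lt_thetaPlus (hl2.trans_le hl) hc.le hθ)
  have hφ_ode (u : ℝ) : HasDerivAt φ (profileSpeed l1 l2 c θ (φ u)) u :=
    (hφ u).hasDerivAt.congr_deriv (hφ' u)
  have hφ_odd : φ.Odd :=
    autonomous_solution_odd (continuous_profileSpeed l1 l2 c θ) (fun x ↦ (hspeed x).ne')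
      (profileSpeed_even l1 l2 c θ) hφ_ode hφ0
  have hf'_even : (deriv f).Even := fun u ↦ by rw [hf', hf', Bfun_even l1 l2 hφ_odd u]
  have hf'_periodic : Function.Periodic (deriv f) U := fun u ↦ by
    rw [hf', hf', Bfun_periodic l1 l2 hφU u]
  have hf_add : ∀ u, f (u + U) = f u + f U := map_add_period_of_periodic_deriv hf hf0 hf'_periodic
  refine ⟨odd_of_even_deriv hf hf0 hf'_even, hf_add, fun k ↦ ?_⟩
  simpa only [zsmul_eq_mul] using map_zsmul_of_map_add_eq hf0 hf_add k
end

section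
/- For every c > 0 there exists a unique θ ∈ (0, π/2) ∩ (0, θ_c⁺) such that H(c,θ) = 0, where H(c,θ) = ∫_{−1}^{1} (D²·B̂(x)·(2c + √(P(x))) − 2c·cos θ) / ((c + √(P(x)))·√((1 − x²)·P(x))) dx with D = sin θ / c, B̂(x) = λ₁²·x² + λ₂²·(1 − x²), and P(x) = c² + 2·cos θ·B̂(x) − D²·B̂(x)². -/
open Real

/-- `B̂(x) = λ₁² x² + λ₂² (1 - x²)`. -/
noncomputable def Bhat (l1 l2 x : ℝ) : ℝ := l1 ^ 2 * x ^ 2 + l2 ^ 2 * (1 - x ^ 2)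

/-- `P(x) = c² + 2 cos θ B̂(x) - D² B̂(x)²` with `D = sin θ / c`. -/
noncomputable def Pfun (l1 l2 c θ x : ℝ) : ℝ :=
  c ^ 2 + 2 * Real.cos θ * Bhat l1 l2 x - (Real.sin θ / c) ^ 2 * Bhat l1 l2 x ^ 2

/-- The period function `H(c,θ)`. -/
noncomputable def Hfun (l1 l2 c θ : ℝ) : ℝ :=
  ∫ x in (-1 : ℝ)..1,
    ((Real.sin θ / c) ^ 2 * Bhat l1 l2 x * (2 * c + Real.sqrt (Pfun l1 l2 c θ x)) -
        2 * c * Real.cos θ) /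
      ((c + Real.sqrt (Pfun l1 l2 c θ x)) * Real.sqrt ((1 - x ^ 2) * Pfun l1 l2 c θ x))

/-!
Put `k = cos θ` and `x = cos t`. Then `c * H(c, θ)` becomes `∫₀^π F(1 + k b(t), b(t)) dt`, where
`b(t) = B̂(cos t) / c²` and `F(a, u) = (2a/√(a² - u²) - 1 - √(a² - u²)) / u`, and `θ < θ_c⁺` becomes
`k > 1 - 1/U` with `U = λ₁² / c²` the maximum of `b`. As `F` is strictly decreasing in `a > u`, the
integral is strictly decreasing in `k`. It is negative at `k = 1`, and as `k ↓ 1 - 1/U` it diverges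
logarithmically to `+∞`, because `b` touches its maximum quadratically at `t = 0`. So there is
exactly one zero; it satisfies `k > 0`, since the integral is positive at `k = 0` if `U < 1`.
-/

open Set Filter Topology

section PeriodDensity

/-- The function `F(a, u)` to which the integrand of `H` reduces, with `u = B̂ / c²` and
`a = 1 + u cos θ`, so that `a² - u² = P / c²`. It is meaningful for `0 < u < a`. -/
noncomputable def periodDensity (a u : ℝ) : ℝ :=
  (2 * a / √(a ^ 2 - u ^ 2) - 1 - √(a ^ 2 - u ^ 2)) / u

variable {a a' u : ℝ}

lemma sq_sub_sq_pos (hu : 0 < u) (hua : u < a) : 0 < a ^ 2 - u ^ 2 :=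
  sub_pos.2 (pow_lt_pow_left₀ hua hu.le two_ne_zero)

lemma div_sqrt_sq_sub_sq_le (hu : 0 < u) (hua : u < a) (haa' : a ≤ a') :
    a' / √(a' ^ 2 - u ^ 2) ≤ a / √(a ^ 2 - u ^ 2) := by
  have hpos := sq_sub_sq_pos hu hua
  have hpos' := sq_sub_sq_pos hu (hua.trans_le haa')
  have ha : 0 < a := hu.trans hua
  rw [div_le_div_iff₀ (sqrt_pos.2 hpos') (sqrt_pos.2 hpos)]
  refine le_of_sq_le_sq ?_ (by positivity)
  rw [mul_pow, mul_pow, sq_sqrt hpos.le, sq_sqrt hpos'.le]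
  have : a ^ 2 * u ^ 2 ≤ a' ^ 2 * u ^ 2 := by gcongr
  linarith

lemma strictAntiOn_periodDensity (hu : 0 < u) :
    StrictAntiOn (fun a => periodDensity a u) (Ioi u) := by
  intro a hua a' _ haa'
  have hquot := div_sqrt_sq_sub_sq_le hu hua haa'.le
  have hsqrt : √(a ^ 2 - u ^ 2) < √(a' ^ 2 - u ^ 2) := by
    have : 0 < a := hu.trans hua
    exact sqrt_lt_sqrt (sq_sub_sq_pos hu hua).le (by gcongr)
  simp only [periodDensity, mul_div_assoc]
  exact div_lt_div_of_pos_right (by linarith) hu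

lemma periodDensity_one_add_neg (hu : 0 < u) : periodDensity (1 + u) u < 0 := by
  have hrad : (1 + u) ^ 2 - u ^ 2 = 1 + 2 * u := by ring
  have hsq : √(1 + 2 * u) ^ 2 = 1 + 2 * u := sq_sqrt (by positivity)
  have hone : 1 < √(1 + 2 * u) := lt_sqrt_of_sq_lt (by linarith)
  have hquot : 2 * (1 + u) / √(1 + 2 * u) < 1 + √(1 + 2 * u) := by
    rw [div_lt_iff₀ (by linarith)]
    linarith
  rw [periodDensity, hrad]
  exact div_neg_of_neg_of_pos (by linarith) hu

lemma periodDensity_one_pos (hu : 0 < u) (hu1 : u < 1) : 0 < periodDensity 1 u := by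
  have hpos : 0 < √(1 ^ 2 - u ^ 2) := sqrt_pos.2 (sq_sub_sq_pos hu hu1)
  have hone : √(1 ^ 2 - u ^ 2) < 1 := (sqrt_lt' one_pos).2 (by nlinarith)
  have hquot : 1 + √(1 ^ 2 - u ^ 2) < 2 * 1 / √(1 ^ 2 - u ^ 2) := by
    rw [lt_div_iff₀ hpos]
    nlinarith
  exact div_pos (by linarith) hu

lemma sub_le_periodDensity (hu : 0 < u) (hua : u < a) :
    2 / √(a ^ 2 - u ^ 2) - (1 + a) / u ≤ periodDensity a u := by
  have hpos : 0 < √(a ^ 2 - u ^ 2) := sqrt_pos.2 (sq_sub_sq_pos hu hua)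
  have hle : √(a ^ 2 - u ^ 2) ≤ a :=
    sqrt_le_iff.2 ⟨(hu.trans hua).le, by linarith [sq_nonneg u]⟩
  calc 2 / √(a ^ 2 - u ^ 2) - (1 + a) / u
      = (2 * u / √(a ^ 2 - u ^ 2) - 1 - a) / u := by field_simp; ring
    _ ≤ periodDensity a u := by unfold periodDensity; gcongr

lemma continuousOn_periodDensity :
    ContinuousOn (fun p : ℝ × ℝ => periodDensity p.1 p.2) {p | 0 < p.2 ∧ p.2 < p.1} := by
  have hsqrt : Continuous fun p : ℝ × ℝ => √(p.1 ^ 2 - p.2 ^ 2) := by fun_prop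
  have hquot : ContinuousOn (fun p : ℝ × ℝ => 2 * p.1 / √(p.1 ^ 2 - p.2 ^ 2))
      {p | 0 < p.2 ∧ p.2 < p.1} :=
    ContinuousOn.div (by fun_prop) hsqrt.continuousOn
      fun p hp => (sqrt_pos.2 (sq_sub_sq_pos hp.1 hp.2)).ne'
  exact ((hquot.sub continuousOn_const).sub hsqrt.continuousOn).div continuousOn_snd
    fun p hp => hp.1.ne'

end PeriodDensity

section NormalizedPeriod

/-- The period `c * H(c, θ)` as a function of `k = cos θ` after the substitution `x = cos t`, for a
profile `b` standing for `t ↦ B̂(cos t) / c²`. -/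
noncomputable def normalizedPeriod (b : ℝ → ℝ) (k : ℝ) : ℝ :=
  ∫ t in 0..π, periodDensity (1 + k * b t) (b t)

variable {b : ℝ → ℝ} {k t u U : ℝ}

lemma mul_one_sub_lt_one (hU : 0 < U) (hk : 1 - U⁻¹ < k) : U * (1 - k) < 1 := by
  rw [← lt_div_iff₀' hU, one_div]
  linarith

lemma lt_one_add_mul (hu : u ∈ Ioc 0 U) (hk : 1 - U⁻¹ < k) : u < 1 + k * u := by
  have hu_inv : U⁻¹ ≤ u⁻¹ := inv_anti₀ hu.1 hu.2
  linarith [mul_one_sub_lt_one hu.1 (k := k) (by linarith)]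

lemma continuous_uncurry_periodDensity_comp (hb : Continuous b) (hbU : ∀ t, b t ∈ Ioc 0 U) :
    Continuous fun p : Ioi (1 - U⁻¹) × ℝ => periodDensity (1 + p.1 * b p.2) (b p.2) :=
  continuousOn_periodDensity.comp_continuous (f := fun p : Ioi (1 - U⁻¹) × ℝ =>
    (1 + p.1 * b p.2, b p.2)) (by fun_prop)
    fun p => ⟨(hbU p.2).1, lt_one_add_mul (hbU p.2) p.1.2⟩

lemma continuous_periodDensity_comp (hb : Continuous b) (hbU : ∀ t, b t ∈ Ioc 0 U)
    (hk : 1 - U⁻¹ < k) : Continuous fun t => periodDensity (1 + k * b t) (b t) :=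
  (continuous_uncurry_periodDensity_comp hb hbU).comp
    (g := fun p : Ioi (1 - U⁻¹) × ℝ => periodDensity (1 + p.1 * b p.2) (b p.2))
    (f := fun t => (⟨k, hk⟩, t)) (by fun_prop)

lemma continuousOn_normalizedPeriod (hb : Continuous b) (hbU : ∀ t, b t ∈ Ioc 0 U) :
    ContinuousOn (normalizedPeriod b) (Ioi (1 - U⁻¹)) := by
  rw [continuousOn_iff_continuous_domRestrict]
  exact intervalIntegral.continuous_parametric_intervalIntegral_of_continuous'
    (continuous_uncurry_periodDensity_comp hb hbU) 0 π

lemma integral_lt_integral_of_continuous {f g : ℝ → ℝ} {x y : ℝ} (hxy : x < y)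
    (hf : Continuous f) (hg : Continuous g) (hfg : ∀ t, f t < g t) :
    ∫ t in x..y, f t < ∫ t in x..y, g t :=
  intervalIntegral.integral_lt_integral_of_continuousOn_of_le_of_exists_lt hxy hf.continuousOn
    hg.continuousOn (fun t _ => (hfg t).le) ⟨x, left_mem_Icc.2 hxy.le, hfg x⟩

lemma strictAntiOn_normalizedPeriod (hb : Continuous b) (hbU : ∀ t, b t ∈ Ioc 0 U) :
    StrictAntiOn (normalizedPeriod b) (Ioi (1 - U⁻¹)) := by
  intro k hk k' hk' hkk'
  refine integral_lt_integral_of_continuous pi_pos (continuous_periodDensity_comp hb hbU hk')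
    (continuous_periodDensity_comp hb hbU hk) fun t => ?_
  have hbt : 0 < b t := (hbU t).1
  exact strictAntiOn_periodDensity hbt (lt_one_add_mul (hbU t) hk) (lt_one_add_mul (hbU t) hk')
    (by gcongr)

lemma normalizedPeriod_one_neg (hb : Continuous b) (hbU : ∀ t, b t ∈ Ioc 0 U) :
    normalizedPeriod b 1 < 0 := by
  have hU : 0 < U := (hbU 0).1.trans_le (hbU 0).2
  have hk : 1 - U⁻¹ < 1 := sub_lt_self _ (inv_pos.2 hU)
  simpa [normalizedPeriod] using integral_lt_integral_of_continuous pi_pos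
    (continuous_periodDensity_comp hb hbU hk) continuous_zero
    fun t => by simpa using periodDensity_one_add_neg (hbU t).1

lemma normalizedPeriod_zero_pos (hb : Continuous b) (hbU : ∀ t, b t ∈ Ioc 0 U) (hU1 : U < 1) :
    0 < normalizedPeriod b 0 := by
  have hU : 0 < U := (hbU 0).1.trans_le (hbU 0).2
  have hk : 1 - U⁻¹ < 0 := sub_neg.2 ((one_lt_inv₀ hU).2 hU1)
  simpa [normalizedPeriod] using integral_lt_integral_of_continuous pi_pos continuous_zero
    (continuous_periodDensity_comp hb hbU hk)
    fun t => by simpa using periodDensity_one_pos (hbU t).1 ((hbU t).2.trans_lt hU1)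

lemma sqrt_sq_sub_sq_le (hu : u ∈ Ioc 0 U) (hquad : U - u ≤ U * t ^ 2) (ht : 0 ≤ t)
    (hk : 1 - U⁻¹ < k) (hk1 : k ≤ 1) :
    √((1 + k * u) ^ 2 - u ^ 2) ≤ √(1 + 2 * U) * (√(1 - U * (1 - k)) + t) := by
  have hU : 0 < U := hu.1.trans_le hu.2
  have hgap : U * (1 - k) < 1 := mul_one_sub_lt_one hU hk
  have hminus : 1 + k * u - u ≤ (1 - U * (1 - k)) + t ^ 2 :=
    calc 1 + k * u - u = (1 - U * (1 - k)) + (1 - k) * (U - u) := by ring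
      _ ≤ (1 - U * (1 - k)) + (1 - k) * (U * t ^ 2) := by gcongr
      _ = (1 - U * (1 - k)) + U * (1 - k) * t ^ 2 := by ring
      _ ≤ (1 - U * (1 - k)) + 1 * t ^ 2 := by gcongr
      _ = (1 - U * (1 - k)) + t ^ 2 := by rw [one_mul]
  have hplus : 1 + k * u + u ≤ 1 + 2 * U := by nlinarith [hu.1, hu.2]
  have hsq : (1 - U * (1 - k)) + t ^ 2 ≤ (√(1 - U * (1 - k)) + t) ^ 2 := by
    rw [add_sq, sq_sqrt (by linarith)]
    linarith [mul_nonneg (sqrt_nonneg (1 - U * (1 - k))) ht]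
  rw [← sqrt_sq (by positivity : 0 ≤ √(1 - U * (1 - k)) + t), ← sqrt_mul (by positivity)]
  refine sqrt_le_sqrt ?_
  rw [sq_sub_sq]
  exact mul_le_mul hplus (hminus.trans hsq) (by linarith [lt_one_add_mul hu hk]) (by positivity)

lemma integral_inv_const_add {ε T : ℝ} (hε : 0 < ε) (hT : 0 ≤ T) :
    ∫ t in 0..T, (ε + t)⁻¹ = log ((ε + T) / ε) := by
  rw [intervalIntegral.integral_comp_add_left (fun t => t⁻¹), add_zero,
    integral_inv_of_pos hε (by positivity)]

lemma le_normalizedPeriod (hb : Continuous b) (hbU : ∀ t, b t ∈ Ioc 0 U)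
    (hquad : ∀ t, U - b t ≤ U * t ^ 2) (hk : 1 - U⁻¹ < k) (hk1 : k ≤ 1) :
    2 / √(1 + 2 * U) * log ((√(1 - U * (1 - k)) + π) / √(1 - U * (1 - k))) -
      ∫ t in 0..π, (2 / b t + 1) ≤ normalizedPeriod b k := by
  have hU : 0 < U := (hbU 0).1.trans_le (hbU 0).2
  have hε : 0 < √(1 - U * (1 - k)) := sqrt_pos.2 (sub_pos.2 (mul_one_sub_lt_one hU hk))
  have hint_log : IntervalIntegrable
      (fun t => 2 / √(1 + 2 * U) * (√(1 - U * (1 - k)) + t)⁻¹) MeasureTheory.volume 0 π := by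
    refine (ContinuousOn.const_mul ?_ _).intervalIntegrable_of_Icc pi_pos.le
    exact ContinuousOn.inv₀ (by fun_prop) fun t ht => (add_pos_of_pos_of_nonneg hε ht.1).ne'
  have hint_inv : IntervalIntegrable (fun t => 2 / b t + 1) MeasureTheory.volume 0 π :=
    ((continuous_const.div hb fun t => (hbU t).1.ne').add continuous_const).intervalIntegrable _ _
  rw [← integral_inv_const_add hε pi_pos.le, ← intervalIntegral.integral_const_mul,
    ← intervalIntegral.integral_sub hint_log hint_inv]
  refine intervalIntegral.integral_mono_on pi_pos.le (hint_log.sub hint_inv)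
    ((continuous_periodDensity_comp hb hbU hk).intervalIntegrable _ _) fun t ht => ?_
  have hbt : 0 < b t := (hbU t).1
  have hlt := lt_one_add_mul (hbU t) hk
  calc 2 / √(1 + 2 * U) * (√(1 - U * (1 - k)) + t)⁻¹ - (2 / b t + 1)
      = 2 / (√(1 + 2 * U) * (√(1 - U * (1 - k)) + t)) - (2 / b t + 1) := by
        rw [← div_eq_mul_inv, div_div]
    _ ≤ 2 / √((1 + k * b t) ^ 2 - b t ^ 2) - (2 / b t + k) := by
        gcongr
        · exact sqrt_pos.2 (sq_sub_sq_pos hbt hlt)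
        · exact sqrt_sq_sub_sq_le (hbU t) (hquad t) ht.1 hk hk1
    _ = 2 / √((1 + k * b t) ^ 2 - b t ^ 2) - (1 + (1 + k * b t)) / b t := by
        congr 1
        field_simp
        ring
    _ ≤ periodDensity (1 + k * b t) (b t) := sub_le_periodDensity hbt hlt

lemma tendsto_log_add_div_nhdsGT_zero {T : ℝ} (hT : 0 < T) :
    Tendsto (fun ε => log ((ε + T) / ε)) (𝓝[>] 0) atTop := by
  have hnum : Tendsto (fun ε => ε + T) (𝓝[>] 0) (𝓝 T) :=
    ((continuous_add_const T).tendsto' 0 T (zero_add T)).mono_left nhdsWithin_le_nhds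
  simpa only [div_eq_mul_inv, Function.comp_def] using
    tendsto_log_atTop.comp (hnum.pos_mul_atTop hT tendsto_inv_nhdsGT_zero)

lemma tendsto_sqrt_one_sub_mul_one_sub (hU : 0 < U) :
    Tendsto (fun k => √(1 - U * (1 - k))) (𝓝[>] (1 - U⁻¹)) (𝓝[>] 0) := by
  refine tendsto_nhdsWithin_iff.2 ⟨?_, ?_⟩
  · refine (Continuous.tendsto' (by fun_prop) _ _ ?_).mono_left nhdsWithin_le_nhds
    simp [hU.ne']
  · filter_upwards [self_mem_nhdsWithin] with k hk
    exact sqrt_pos.2 (sub_pos.2 (mul_one_sub_lt_one hU hk))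

lemma tendsto_normalizedPeriod_atTop (hb : Continuous b) (hbU : ∀ t, b t ∈ Ioc 0 U)
    (hquad : ∀ t, U - b t ≤ U * t ^ 2) :
    Tendsto (normalizedPeriod b) (𝓝[>] (1 - U⁻¹)) atTop := by
  have hU : 0 < U := (hbU 0).1.trans_le (hbU 0).2
  have hlog := (tendsto_log_add_div_nhdsGT_zero pi_pos).comp (tendsto_sqrt_one_sub_mul_one_sub hU)
  refine tendsto_atTop_mono' _ ?_ (tendsto_atTop_add_const_right _ (-∫ t in 0..π, (2 / b t + 1))
    (hlog.const_mul_atTop (by positivity : 0 < 2 / √(1 + 2 * U))))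
  filter_upwards [Ioo_mem_nhdsGT (sub_lt_self 1 (inv_pos.2 hU))] with k hk
  exact le_normalizedPeriod hb hbU hquad hk.1 hk.2.le

lemma exists_normalizedPeriod_pos (hb : Continuous b) (hbU : ∀ t, b t ∈ Ioc 0 U)
    (hquad : ∀ t, U - b t ≤ U * t ^ 2) :
    ∃ k ∈ Ico 0 1, 1 - U⁻¹ < k ∧ 0 < normalizedPeriod b k := by
  have hU : 0 < U := (hbU 0).1.trans_le (hbU 0).2
  rcases lt_or_ge U 1 with hU1 | hU1
  · exact ⟨0, ⟨le_rfl, one_pos⟩, sub_neg.2 ((one_lt_inv₀ hU).2 hU1),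
      normalizedPeriod_zero_pos hb hbU hU1⟩
  · have hnear : Ioo (1 - U⁻¹) 1 ∈ 𝓝[>] (1 - U⁻¹) :=
      Ioo_mem_nhdsGT (sub_lt_self 1 (inv_pos.2 hU))
    obtain ⟨k, hk, hpos⟩ := (Eventually.and hnear
      ((tendsto_normalizedPeriod_atTop hb hbU hquad).eventually_gt_atTop 0)).exists
    have hk0 : 0 ≤ k := (sub_nonneg.2 (inv_le_one_of_one_le₀ hU1)).trans hk.1.le
    exact ⟨k, ⟨hk0, hk.2⟩, hk.1, hpos⟩

lemma existsUnique_normalizedPeriod_eq_zero (hb : Continuous b) (hbU : ∀ t, b t ∈ Ioc 0 U)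
    (hquad : ∀ t, U - b t ≤ U * t ^ 2) :
    ∃! k, k ∈ Ioo 0 1 ∧ 1 - U⁻¹ < k ∧ normalizedPeriod b k = 0 := by
  obtain ⟨k₀, ⟨hk₀, hk₀1⟩, hk₀U, hpos⟩ := exists_normalizedPeriod_pos hb hbU hquad
  have hcont : ContinuousOn (normalizedPeriod b) (Icc k₀ 1) :=
    (continuousOn_normalizedPeriod hb hbU).mono fun k hk => hk₀U.trans_le hk.1
  obtain ⟨k, hk, hzero⟩ :=
    intermediate_value_Ioo' hk₀1.le hcont ⟨normalizedPeriod_one_neg hb hbU, hpos⟩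
  have hkU : 1 - U⁻¹ < k := hk₀U.trans hk.1
  refine ⟨k, ⟨⟨hk₀.trans_lt hk.1, hk.2⟩, hkU, hzero⟩, fun k' ⟨_, hk'U, hzero'⟩ => ?_⟩
  exact (strictAntiOn_normalizedPeriod hb hbU).injOn hk'U hkU (hzero'.trans hzero.symm)

end NormalizedPeriod

section Substitution

variable {l1 l2 c θ : ℝ}

lemma lt_arccos_iff_lt_cos {y : ℝ} (hθ0 : 0 ≤ θ) (hθπ : θ < π) : θ < arccos y ↔ y < cos θ := by
  constructor
  · contrapose!
    intro hle
    simpa only [arccos_cos hθ0 hθπ.le] using antitone_arccos hle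
  · intro hlt
    rcases le_or_gt y (-1) with hy | hy
    · rwa [arccos_of_le_neg_one hy]
    · simpa only [arccos_cos hθ0 hθπ.le] using arccos_lt_arccos hy.le hlt (cos_le_one θ)

lemma thetaPlus_eq_arccos (hl1 : 0 < l1) :
    thetaPlus l1 c = arccos (1 - (l1 ^ 2 / c ^ 2)⁻¹) := by
  rw [inv_div, thetaPlus, ite_eq_right_iff]
  intro hlarge
  have hsq : 2 * l1 ^ 2 ≤ c ^ 2 := by
    calc 2 * l1 ^ 2 = (√2 * l1) ^ 2 := by rw [mul_pow, sq_sqrt zero_le_two]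
      _ ≤ c ^ 2 := by gcongr
  have hratio : 2 ≤ c ^ 2 / l1 ^ 2 := (le_div_iff₀ (by positivity)).2 hsq
  exact (arccos_of_le_neg_one (by linarith)).symm

lemma bijOn_cos_Ioo : BijOn cos (Ioo 0 (π / 2)) (Ioo 0 1) := by
  refine ⟨fun θ hθ => ⟨?_, ?_⟩, injOn_cos.mono ?_, fun k hk => ⟨arccos k, ⟨?_, ?_⟩, ?_⟩⟩
  · exact cos_pos_of_mem_Ioo ⟨by linarith [hθ.1, pi_pos], hθ.2⟩
  · simpa using cos_lt_cos_of_nonneg_of_le_pi_div_two le_rfl hθ.2.le hθ.1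
  · exact fun θ hθ => ⟨hθ.1.le, by linarith [hθ.2, pi_pos]⟩
  · exact arccos_pos.2 hk.2
  · exact arccos_lt_pi_div_two.2 hk.1
  · exact cos_arccos (by linarith [hk.1]) hk.2.le

lemma existsUnique_mem_of_bijOn {α β : Type*} {f : α → β} {s : Set α} {t : Set β}
    {p : β → Prop} (hf : BijOn f s t) (h : ∃! y, y ∈ t ∧ p y) : ∃! x, x ∈ s ∧ p (f x) := by
  obtain ⟨y, ⟨hy, hpy⟩, huniq⟩ := h
  obtain ⟨x, hx, rfl⟩ := hf.surjOn hy
  exact ⟨x, ⟨hx, hpy⟩, fun x' ⟨hx', hpx'⟩ =>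
    hf.injOn hx' hx (huniq _ ⟨hf.mapsTo hx', hpx'⟩)⟩

lemma Bhat_mem_Icc {x : ℝ} (hl : l2 ^ 2 ≤ l1 ^ 2) (hx : x ^ 2 ≤ 1) :
    Bhat l1 l2 x ∈ Icc (l2 ^ 2) (l1 ^ 2) := by
  unfold Bhat
  constructor <;> nlinarith [sq_nonneg x]

lemma Bhat_div_sq_mem_Ioc {x : ℝ} (hl2 : 0 < l2) (hl : l2 ≤ l1) (hc : 0 < c) (hx : x ^ 2 ≤ 1) :
    Bhat l1 l2 x / c ^ 2 ∈ Ioc 0 (l1 ^ 2 / c ^ 2) := by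
  have hmem : Bhat l1 l2 x ∈ Icc (l2 ^ 2) (l1 ^ 2) := Bhat_mem_Icc (by gcongr) hx
  have hpos : 0 < Bhat l1 l2 x := (pow_pos hl2 2).trans_le hmem.1
  exact ⟨by positivity, by gcongr; exact hmem.2⟩

lemma sub_Bhat_cos_div_sq_le (t : ℝ) :
    l1 ^ 2 / c ^ 2 - Bhat l1 l2 (cos t) / c ^ 2 ≤ l1 ^ 2 / c ^ 2 * t ^ 2 := by
  have hdiff : l1 ^ 2 - Bhat l1 l2 (cos t) = (l1 ^ 2 - l2 ^ 2) * sin t ^ 2 := by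
    rw [Bhat, sin_sq]
    ring
  rw [← sub_div, hdiff, div_mul_eq_mul_div]
  gcongr ?_ / _
  exact mul_le_mul (sub_le_self _ (sq_nonneg l2)) sin_sq_le_sq (sq_nonneg _) (sq_nonneg _)

lemma Pfun_eq (hc : c ≠ 0) (x : ℝ) :
    Pfun l1 l2 c θ x = c ^ 2 *
      ((1 + cos θ * (Bhat l1 l2 x / c ^ 2)) ^ 2 - (Bhat l1 l2 x / c ^ 2) ^ 2) := by
  rw [Pfun, div_pow, sin_sq]
  field_simp
  ring

-- `√(1 - x ^ 2)⁻¹`, the root of the inverse, is the density of Mathlib's Chebyshev measure.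
lemma Hfun_integrand_eq {x : ℝ} (hc : 0 < c) (hx : x ^ 2 ≤ 1) (hB : 0 < Bhat l1 l2 x / c ^ 2)
    (hlt : Bhat l1 l2 x / c ^ 2 < 1 + cos θ * (Bhat l1 l2 x / c ^ 2)) :
    ((sin θ / c) ^ 2 * Bhat l1 l2 x * (2 * c + √(Pfun l1 l2 c θ x)) - 2 * c * cos θ) /
        ((c + √(Pfun l1 l2 c θ x)) * √((1 - x ^ 2) * Pfun l1 l2 c θ x)) =
      c⁻¹ * periodDensity (1 + cos θ * (Bhat l1 l2 x / c ^ 2)) (Bhat l1 l2 x / c ^ 2) *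
        √(1 - x ^ 2)⁻¹ := by
  have hnum : (sin θ / c) ^ 2 * Bhat l1 l2 x = (1 - cos θ ^ 2) * (Bhat l1 l2 x / c ^ 2) := by
    rw [div_pow, sin_sq]
    ring
  rw [sqrt_mul (sub_nonneg.2 hx), hnum, Pfun_eq hc.ne', sqrt_mul (sq_nonneg c), sqrt_sq hc.le,
    sqrt_inv, periodDensity]
  have hpos := sq_sub_sq_pos hB hlt
  have hsq := sq_sqrt hpos.le
  have hq := sqrt_pos.2 hpos
  set u := Bhat l1 l2 x / c ^ 2
  set q := √((1 + cos θ * u) ^ 2 - u ^ 2)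
  have hcos : (1 - cos θ ^ 2) * u = (1 + 2 * cos θ * u - q ^ 2) / u := by
    rw [hsq]
    field_simp
    ring
  rw [hcos, mul_comm √(1 - x ^ 2), ← mul_assoc, ← div_div, div_eq_mul_inv _ √(1 - x ^ 2)]
  congr 1
  field_simp
  ring

lemma Hfun_eq (hl2 : 0 < l2) (hl : l2 ≤ l1) (hc : 0 < c)
    (hθ : 1 - (l1 ^ 2 / c ^ 2)⁻¹ < cos θ) :
    Hfun l1 l2 c θ = c⁻¹ * normalizedPeriod (fun t => Bhat l1 l2 (cos t) / c ^ 2) (cos θ) := by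
  rw [normalizedPeriod, ← intervalIntegral.integral_const_mul,
    ← Polynomial.Chebyshev.integral_measureT_eq_integral_cos (f := fun x =>
      c⁻¹ * periodDensity (1 + cos θ * (Bhat l1 l2 x / c ^ 2)) (Bhat l1 l2 x / c ^ 2)),
    Polynomial.Chebyshev.integral_measureT]
  refine intervalIntegral.integral_congr fun x hx => ?_
  rw [uIcc_of_le (by norm_num)] at hx
  have hx : x ^ 2 ≤ 1 := sq_le_one_iff_abs_le_one x |>.2 (abs_le.2 hx)
  have hmem := Bhat_div_sq_mem_Ioc hl2 hl hc hx
  exact Hfun_integrand_eq hc hx hmem.1 (lt_one_add_mul hmem hθ)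

end Substitution

theorem catenoid_period_problem_solvable
    (l1 l2 : ℝ) (hl : l1 ≥ l2) (hl2 : l2 > 0) :
    ∀ c > 0, ∃! θ, θ ∈ Set.Ioo 0 (π / 2) ∩ Set.Ioo 0 (thetaPlus l1 c) ∧
      Hfun l1 l2 c θ = 0 := by
  intro c hc
  have hl1 : 0 < l1 := hl2.trans_le hl
  have hb : Continuous fun t => Bhat l1 l2 (cos t) / c ^ 2 := by unfold Bhat; fun_prop
  have hbU (t : ℝ) := Bhat_div_sq_mem_Ioc hl2 hl hc (cos_sq_le_one t)
  refine (existsUnique_congr fun θ => ?_).2 (existsUnique_mem_of_bijOn bijOn_cos_Ioo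
    (existsUnique_normalizedPeriod_eq_zero hb hbU sub_Bhat_cos_div_sq_le))
  rw [mem_inter_iff, and_assoc]
  refine and_congr_right fun hθ => ?_
  rw [thetaPlus_eq_arccos hl1, mem_Ioo, and_iff_right hθ.1,
    lt_arccos_iff_lt_cos hθ.1.le (by linarith [hθ.2, pi_pos])]
  refine and_congr_right fun hcos => ?_
  rw [Hfun_eq hl2 hl hc hcos, mul_eq_zero, or_iff_right (inv_ne_zero hc.ne')]
end
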